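/- Let n \ge 2 and let a, b be integers with 0 \le a \le b. There exists an integer N (depending on n, a, b) such that for every odd integer q > N: N_B(n,q,-a,b) = N_B(n,q-2na,0,b-a), N_C(n,q,-a,b) = N_C(n,q-2na,0,b-a), and N_D(n,q,-a,b) = N_D(n,q-(2n-2)a,0,b-a). (Note that q - 2na and q - (2n-2)a are again odd.) -/

import Mathlib

open Polynomial

/-- `x` avoids the integer interval `[u, v]` in `ZMod q`. -/
def Avoids {q : ℕ} (x : ZMod q) (u v : ℤ) : Prop :=
  ∀ k : ℤ, u ≤ k → k ≤ v → x ≠ (k : ZMod q)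

/-- Count for the type `B` deformation: `x_i`, `x_i - x_j` and `x_i + x_j`
all avoid `[u, v]`. -/
noncomputable def N_B (n q : ℕ) (u v : ℤ) : ℕ :=
  Set.ncard {x : Fin n → ZMod q |
    (∀ i, Avoids (x i) u v) ∧
    ∀ i j : Fin n, i < j → Avoids (x i - x j) u v ∧ Avoids (x i + x j) u v}

/-- Count for the type `C` deformation: `2x_i`, `x_i - x_j` and `x_i + x_j`
all avoid `[u, v]`. -/
noncomputable def N_C (n q : ℕ) (u v : ℤ) : ℕ :=
  Set.ncard {x : Fin n → ZMod q |
    (∀ i, Avoids (2 * x i) u v) ∧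
    ∀ i j : Fin n, i < j → Avoids (x i - x j) u v ∧ Avoids (x i + x j) u v}

/-- Count for the type `BC` deformation: `x_i`, `2x_i`, `x_i - x_j` and `x_i + x_j`
all avoid `[u, v]`. -/
noncomputable def N_BC (n q : ℕ) (u v : ℤ) : ℕ :=
  Set.ncard {x : Fin n → ZMod q |
    (∀ i, Avoids (x i) u v ∧ Avoids (2 * x i) u v) ∧
    ∀ i j : Fin n, i < j → Avoids (x i - x j) u v ∧ Avoids (x i + x j) u v}

/-- Count for the type `D` deformation: `x_i - x_j` and `x_i + x_j`
avoid `[u, v]`. -/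
noncomputable def N_D (n q : ℕ) (u v : ℤ) : ℕ :=
  Set.ncard {x : Fin n → ZMod q |
    ∀ i j : Fin n, i < j → Avoids (x i - x j) u v ∧ Avoids (x i + x j) u v}

/-- `1 + y + y^2 + ... + y^(m-1)`. -/
noncomputable def phi (m : ℕ) : ℚ[X] := ∑ i ∈ Finset.range m, X ^ i

/-- `1 + y^2 + y^4 + ... + y^(2(m-1))`. -/
noncomputable def phi2 (m : ℕ) : ℚ[X] := ∑ i ∈ Finset.range m, X ^ (2 * i)

/-- For `g = ∑_k g_k y^k`, the sum `∑_k g_k (q - k)^n`. -/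
noncomputable def polysum (g : ℚ[X]) (q n : ℕ) : ℚ :=
  ∑ k ∈ Finset.range (g.natDegree + 1), g.coeff k * ((q : ℚ) - (k : ℚ)) ^ n

/-- Affine roots, recorded as (doubled height, doubled value, sign functional). -/
inductive Rt {n : ℕ} (c : ℕ) (h : ℤ) (r : Fin n → ℕ) (μ m : Fin n → ℤ) (q : ℤ) :
    ℤ → ℤ → ℤ → Prop
  | sub (i j : Fin n) (hij : r j < r i) :
      Rt c h r μ m q (2 * r i - 2 * r j) (m i - m j) (μ i - μ j)
  | subc (i j : Fin n) (hij : r j < r i) :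
      Rt c h r μ m q (2 * h - (2 * r i - 2 * r j)) (2 * q - (m i - m j)) (-(μ i - μ j))
  | add (i j : Fin n) (hij : r j < r i) :
      Rt c h r μ m q (2 * r i + 2 * r j + 2 * c) (m i + m j) (μ i + μ j)
  | addc (i j : Fin n) (hij : r j < r i) :
      Rt c h r μ m q (2 * h - (2 * r i + 2 * r j + 2 * c)) (2 * q - (m i + m j)) (-(μ i + μ j))
  | one (i : Fin n) (hc : c = 2) : Rt c h r μ m q (2 * r i + 2) (m i) (μ i)
  | onec (i : Fin n) (hc : c = 2) :
      Rt c h r μ m q (2 * h - (2 * r i + 2)) (2 * q - m i) (-μ i)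
  | dbl (i : Fin n) (hc : c = 1) : Rt c h r μ m q (4 * r i + 2) (2 * m i) (2 * μ i)
  | dblc (i : Fin n) (hc : c = 1) :
      Rt c h r μ m q (2 * h - (4 * r i + 2)) (2 * q - 2 * m i) (-(2 * μ i))

/-- The admissible combinations of type and Coxeter number. -/
def Typ (n c : ℕ) (h : ℤ) : Prop :=
  (c = 0 ∧ h = 2 * n - 2) ∨ (c = 1 ∧ h = 2 * n) ∨ (c = 2 ∧ h = 2 * n)

theorem Rt.two_le {n c : ℕ} {h : ℤ} {r : Fin n → ℕ} {μ m : Fin n → ℤ} {q : ℤ}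
    (hT : Typ n c h) (hr : ∀ i, r i < n) {x y z : ℤ} (H : Rt c h r μ m q x y z) : 2 ≤ x := by
  unfold Typ at hT
  cases H with
  | sub i j hij => omega
  | subc i j hij => have := hr i; have := hr j; omega
  | add i j hij => omega
  | addc i j hij => have := hr i; have := hr j; omega
  | one i hc => omega
  | onec i hc => have := hr i; omega
  | dbl i hc => omega
  | dblc i hc => have := hr i; omega

theorem Rt.cast {n c : ℕ} {h : ℤ} {r : Fin n → ℕ} {μ m : Fin n → ℤ} {q : ℤ}
    {x y z x' y' z' : ℤ} (H : Rt c h r μ m q x y z) (hx : x = x') (hy : y = y') (hz : z = z') :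
    Rt c h r μ m q x' y' z' := by subst hx hy hz; exact H

theorem Rt.split {n c : ℕ} {h : ℤ} {r : Fin n → ℕ} {μ m : Fin n → ℤ} {q : ℤ}
    (hn : 2 ≤ n) (hT : Typ n c h) (hr : ∀ i, r i < n) (hs : ∀ t < n, ∃ i, r i = t)
    {x y z : ℤ} (H : Rt c h r μ m q x y z) :
    x = 2 ∨ ∃ x₁ y₁ z₁ x₂ y₂ z₂, Rt c h r μ m q x₁ y₁ z₁ ∧ Rt c h r μ m q x₂ y₂ z₂ ∧
      x = x₁ + x₂ ∧ y = y₁ + y₂ ∧ z = z₁ + z₂ := by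
  unfold Typ at hT
  cases H with
  | sub i j hij =>
    have := hr i
    by_cases h1 : r i = r j + 1
    · left; omega
    · obtain ⟨k, hk⟩ := hs (r j + 1) (by omega)
      exact Or.inr ⟨_, _, _, _, _, _, .sub i k (by omega), .sub k j (by omega),
        by omega, by ring, by ring⟩
  | subc i j hij =>
    have := hr i
    by_cases h1 : r i + 1 < n
    · obtain ⟨k, hk⟩ := hs (r i + 1) h1
      exact Or.inr ⟨_, _, _, _, _, _, .sub k i (by omega), .subc k j (by omega),
        by omega, by ring, by ring⟩
    by_cases h2 : 0 < r j
    · obtain ⟨k, hk⟩ := hs 0 (by omega)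
      exact Or.inr ⟨_, _, _, _, _, _, .sub j k (by omega), .subc i k (by omega),
        by omega, by ring, by ring⟩
    rcases hT with ⟨hc, hh⟩ | ⟨hc, hh⟩ | ⟨hc, hh⟩
    · by_cases h3 : n = 2
      · left; omega
      · obtain ⟨k, hk⟩ := hs 1 (by omega)
        exact Or.inr ⟨_, _, _, _, _, _, .addc i k (by omega), .add k j (by omega),
          by omega, by ring, by ring⟩
    · exact Or.inr ⟨_, _, _, _, _, _, .addc i j (by omega), .dbl j hc,
          by omega, by ring, by ring⟩
    · exact Or.inr ⟨_, _, _, _, _, _, .onec i hc, .one j hc,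
          by omega, by ring, by ring⟩
  | add i j hij =>
    have := hr i
    rcases hT with ⟨hc, hh⟩ | ⟨hc, hh⟩ | ⟨hc, hh⟩
    · by_cases h2 : 0 < r j
      · obtain ⟨k, hk⟩ := hs 0 (by omega)
        exact Or.inr ⟨_, _, _, _, _, _, .sub j k (by omega), .add i k (by omega),
          by omega, by ring, by ring⟩
      by_cases h1 : r i = r j + 1
      · left; omega
      · obtain ⟨k, hk⟩ := hs (r j + 1) (by omega)
        exact Or.inr ⟨_, _, _, _, _, _, .sub i k (by omega), .add k j (by omega),
          by omega, by ring, by ring⟩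
    · exact Or.inr ⟨_, _, _, _, _, _, .sub i j (by omega), .dbl j hc,
          by omega, by ring, by ring⟩
    · exact Or.inr ⟨_, _, _, _, _, _, .one i hc, .one j hc,
          by omega, by ring, by ring⟩
  | addc i j hij =>
    have := hr i
    by_cases h1 : r i + 1 < n
    · obtain ⟨k, hk⟩ := hs (r i + 1) h1
      exact Or.inr ⟨_, _, _, _, _, _, .sub k i (by omega), .addc k j (by omega),
        by omega, by ring, by ring⟩
    by_cases h2 : r i = r j + 1
    · by_cases hc : c = 1
      · exact Or.inr ⟨_, _, _, _, _, _, .sub i j (by omega), .dblc i hc,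
          by omega, by ring, by ring⟩
      · left; omega
    · obtain ⟨k, hk⟩ := hs (r j + 1) (by omega)
      exact Or.inr ⟨_, _, _, _, _, _, .sub k j (by omega), .addc i k (by omega),
        by omega, by ring, by ring⟩
  | one i hc =>
    by_cases h2 : 0 < r i
    · obtain ⟨k, hk⟩ := hs 0 (by omega)
      exact Or.inr ⟨_, _, _, _, _, _, .sub i k (by omega), .one k hc,
          by omega, by ring, by ring⟩
    · left; omega
  | onec i hc =>
    have := hr i
    by_cases h2 : 0 < r i
    · obtain ⟨k, hk⟩ := hs 0 (by omega)
      exact Or.inr ⟨_, _, _, _, _, _, .addc i k (by omega), .one k hc,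
          by omega, by ring, by ring⟩
    · obtain ⟨k, hk⟩ := hs 1 (by omega)
      exact Or.inr ⟨_, _, _, _, _, _, .addc k i (by omega), .one k hc,
          by omega, by ring, by ring⟩
  | dbl i hc =>
    by_cases h2 : 0 < r i
    · obtain ⟨k, hk⟩ := hs 0 (by omega)
      exact Or.inr ⟨_, _, _, _, _, _, .sub i k (by omega), .add i k (by omega),
          by omega, by ring, by ring⟩
    · left; omega
  | dblc i hc =>
    have := hr i
    by_cases h1 : r i + 1 < n
    · obtain ⟨k, hk⟩ := hs (r i + 1) h1
      exact Or.inr ⟨_, _, _, _, _, _, .sub k i (by omega), .addc k i (by omega),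
        by omega, by ring, by ring⟩
    · left; omega

/-- All affine roots satisfy their lower bounds. -/
def Good {n : ℕ} (c : ℕ) (h : ℤ) (r : Fin n → ℕ) (μ m : Fin n → ℤ) (q A B : ℤ) : Prop :=
  ∀ x y z, Rt c h r μ m q x y z → 2 * A < y ∧ (0 < z → 2 * B < y)

theorem Rt.shift {n c : ℕ} {h : ℤ} {r : Fin n → ℕ} {μ m m' : Fin n → ℤ} {q q' t : ℤ}
    (hm : ∀ i, m' i = m i + t * (2 * r i + c)) (hq : q' = q + t * h)
    {x y z : ℤ} (H : Rt c h r μ m q x y z) : Rt c h r μ m' q' x (y + t * x) z := by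
  cases H with
  | sub i j hij => exact (Rt.sub i j hij).cast rfl (by rw [hm, hm]; ring) rfl
  | subc i j hij => exact (Rt.subc i j hij).cast rfl (by rw [hm, hm, hq]; ring) rfl
  | add i j hij => exact (Rt.add i j hij).cast rfl (by rw [hm, hm]; ring) rfl
  | addc i j hij => exact (Rt.addc i j hij).cast rfl (by rw [hm, hm, hq]; ring) rfl
  | one i hc => exact (Rt.one i hc).cast rfl (by rw [hm, hc]; push_cast; ring) rfl
  | onec i hc => exact (Rt.onec i hc).cast rfl (by rw [hm, hq, hc]; push_cast; ring) rfl
  | dbl i hc => exact (Rt.dbl i hc).cast rfl (by rw [hm, hc]; push_cast; ring) rfl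
  | dblc i hc => exact (Rt.dblc i hc).cast rfl (by rw [hm, hq, hc]; push_cast; ring) rfl

theorem Good.shift {n c : ℕ} {h : ℤ} {r : Fin n → ℕ} {μ m m' : Fin n → ℤ} {q q' t A B : ℤ}
    (hn : 2 ≤ n) (hT : Typ n c h) (hr : ∀ i, r i < n) (hs : ∀ t < n, ∃ i, r i = t)
    (hm : ∀ i, m' i = m i + t * (2 * r i + c)) (hq : q' = q + t * h)
    (hA : 0 ≤ A + t)
    (hG : Good c h r μ m q A B) : Good c h r μ m' q' (A + t) (B + t) := by
  have key : ∀ N : ℕ, ∀ x y z, Rt c h r μ m q x y z → x ≤ N →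
      2 * (A + t) < y + t * x ∧ (0 < z → 2 * (B + t) < y + t * x) := by
    intro N
    induction N with
    | zero => intro x y z H hx; have := H.two_le hT hr; push_cast at hx; omega
    | succ N ih =>
      intro x y z H hx
      rcases H.split hn hT hr hs with h2 | ⟨x₁, y₁, z₁, x₂, y₂, z₂, H1, H2, ex, ey, ez⟩
      · subst h2
        obtain ⟨g1, g2⟩ := hG _ _ _ H
        exact ⟨by linarith, fun hz => by linarith [g2 hz]⟩
      · have t1 := H1.two_le hT hr
        have t2 := H2.two_le hT hr
        push_cast at hx
        obtain ⟨a1, b1⟩ := ih _ _ _ H1 (by omega)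
        obtain ⟨a2, b2⟩ := ih _ _ _ H2 (by omega)
        have e : y + t * x = (y₁ + t * x₁) + (y₂ + t * x₂) := by rw [ex, ey]; ring
        rw [e]
        refine ⟨by linarith, fun hz => ?_⟩
        rcases lt_or_ge 0 z₁ with hz1 | hz1
        · linarith [b1 hz1]
        · linarith [b2 (by linarith)]
  intro x y z H
  have H' : Rt c h r μ m q x (y + (-t) * x) z :=
    H.shift (t := -t) (fun i => by rw [hm]; ring) (by rw [hq]; ring)
  have := key x.toNat _ _ _ H' (by omega)
  simpa using this

theorem Good.bounds {n c : ℕ} {h : ℤ} {r : Fin n → ℕ} {μ m m' : Fin n → ℤ} {q q' t A B : ℤ}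
    (hn : 2 ≤ n) (hT : Typ n c h) (hr : ∀ i, r i < n) (hs : ∀ t < n, ∃ i, r i = t)
    (hm : ∀ i, m' i = m i + t * (2 * r i + c)) (hq : q' = q + t * h)
    (hA : 0 ≤ A) (hG : Good c h r μ m' q' A B) (hb : ∀ i, 0 ≤ m i ∧ m i < q) :
    ∀ i, 0 ≤ m' i ∧ m' i < q' ∧ (0 < c → 0 < m' i) := by
  have lo : ∀ i, r i ≠ 0 → ∃ k, r k = 0 ∧ m' k < m' i := by
    intro i hi
    obtain ⟨k, hk⟩ := hs 0 (by omega)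
    exact ⟨k, hk, by have := (hG _ _ _ (.sub i k (by omega))).1; omega⟩
  have hi : ∀ i, r i ≠ n - 1 → ∃ k, r k = n - 1 ∧ m' i < m' k := by
    intro i hi
    obtain ⟨k, hk⟩ := hs (n - 1) (by omega)
    have := hr i
    exact ⟨k, hk, by have := (hG _ _ _ (.sub k i (by omega))).1; omega⟩
  have lo0 : c = 0 → ∀ i, r i = 0 → 0 ≤ m' i := by
    intro hc i h0
    rw [hm, h0, hc]; simpa using (hb i).1
  have top : (c = 0 ∨ c = 2) → ∀ i, r i = n - 1 → m' i < q' := by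
    intro hc i h0
    have e : (2 * r i + c : ℤ) = h := by unfold Typ at hT; omega
    rw [hm, hq, e]; linarith [(hb i).2]
  intro i
  rcases (show c = 0 ∨ c = 1 ∨ c = 2 by unfold Typ at hT; omega) with hc | hc | hc
  · refine ⟨?_, ?_, by omega⟩
    · by_cases h0 : r i = 0
      · exact lo0 hc i h0
      · obtain ⟨k, hk, hlt⟩ := lo i h0; have := lo0 hc k hk; omega
    · by_cases h0 : r i = n - 1
      · exact top (Or.inl hc) i h0
      · obtain ⟨k, hk, hlt⟩ := hi i h0; have := top (Or.inl hc) k hk; omega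
  · have h1 := (hG _ _ _ (.dbl i hc)).1
    have h2 := (hG _ _ _ (.dblc i hc)).1
    omega
  · have h1 := (hG _ _ _ (.one i hc)).1
    refine ⟨by omega, ?_, by omega⟩
    by_cases h0 : r i = n - 1
    · exact top (Or.inr hc) i h0
    · obtain ⟨k, hk, hlt⟩ := hi i h0; have := top (Or.inr hc) k hk; omega

/-- The integer version of avoidance, in doubled coordinates. -/
def Av (q D A B : ℤ) : Prop := ∀ k : ℤ, -A ≤ k → k ≤ B → ¬ q ∣ D - 2 * k

/-- Avoidance oriented by the sign of `l`. -/
def Pc (q A B D l : ℤ) : Prop := (0 < l → Av q D A B) ∧ (l < 0 → Av q (-D) A B)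

theorem Pc_pos {q A B D l : ℤ} (hl : 0 < l) : Pc q A B D l ↔ Av q D A B := by
  unfold Pc
  exact ⟨fun h => h.1 hl, fun h => ⟨fun _ => h, fun h' => by omega⟩⟩

theorem Pc_neg {q A B D l : ℤ} (hl : l < 0) : Pc q A B D l ↔ Av q (-D) A B := by
  unfold Pc
  exact ⟨fun h => h.2 hl, fun h => ⟨fun h' => by omega, fun _ => h⟩⟩

theorem Pc_symm {q A B D l : ℤ} : Pc q A B (-D) (-l) ↔ Pc q A B D l := by
  rcases lt_trichotomy l 0 with h | h | h
  · rw [Pc_neg h, Pc_pos (by omega)]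
  · subst h; simp [Pc]
  · rw [Pc_pos h, Pc_neg (by omega), neg_neg]

theorem Av_iff {q D A B : ℤ} (hq : Odd q) (hD : Even D) (h0 : 0 ≤ D) (h1 : D < 2 * q)
    (hA : 0 ≤ A) (hB : 0 ≤ B) : Av q D A B ↔ 2 * B < D ∧ 2 * A < 2 * q - D := by
  obtain ⟨d, rfl⟩ := hD
  constructor
  · intro h
    constructor
    · by_contra hc
      exact h d (by omega) (by omega) ⟨0, by ring⟩
    · by_contra hc
      exact h (d - q) (by omega) (by omega) ⟨2, by ring⟩
  · rintro ⟨h2, h3⟩ k hk1 hk2 hdvd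
    have h4 : q ∣ d - k := by
      have : IsCoprime q 2 := by
        obtain ⟨w, rfl⟩ := hq
        exact ⟨1, -w, by ring⟩
      have e : 2 * (d - k) = d + d - 2 * k := by ring
      exact this.dvd_of_dvd_mul_left (by rw [e]; exact hdvd)
    obtain ⟨t, ht⟩ := h4
    have t1 : 0 < t := by
      by_contra hc
      have : q * t ≤ 0 := mul_nonpos_of_nonneg_of_nonpos (by omega) (by omega)
      omega
    have : q * 1 ≤ q * t := mul_le_mul_of_nonneg_left (by omega) (by omega)
    omega

theorem Av_neg {q D A B : ℤ} : Av q (-D) A B ↔ Av q D B A := by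
  unfold Av
  constructor
  · intro h k h1 h2 hd
    have e : -D - 2 * -k = -(D - 2 * k) := by ring
    exact h (-k) (by omega) (by omega) (by rw [e, dvd_neg]; exact hd)
  · intro h k h1 h2 hd
    have e : D - 2 * -k = -(-D - 2 * k) := by ring
    exact h (-k) (by omega) (by omega) (by rw [e, dvd_neg]; exact hd)

theorem Pc_iff {q D A B l : ℤ} (hq : Odd q) (hD : Even D) (h0 : 0 ≤ D) (h1 : D < 2 * q)
    (hA : 0 ≤ A) (hB : A ≤ B) (hl : l ≠ 0) : Pc q A B D l ↔
      (2 * A < D ∧ (0 < l → 2 * B < D)) ∧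
      (2 * A < 2 * q - D ∧ (0 < -l → 2 * B < 2 * q - D)) := by
  rcases lt_or_gt_of_ne hl with h | h
  · rw [Pc_neg h, Av_neg, Av_iff hq hD h0 h1 (by omega) hA]
    constructor
    · intro; omega
    · intro; omega
  · rw [Pc_pos h, Av_iff hq hD h0 h1 hA (by omega)]
    constructor
    · intro; omega
    · intro; omega

/-- Conditions for one pair, with signs normalized. -/
theorem pair_iff {q A B mi mj si sj li lj : ℤ} (hsi : si = 1 ∨ si = -1) (hsj : sj = 1 ∨ sj = -1)
    (hj : 0 < lj) (hij : lj < li) :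
    (Av q (si * mi - sj * mj) A B ∧ Av q (si * mi + sj * mj) A B) ↔
    (Pc q A B (mi - mj) (si * li - sj * lj) ∧ Pc q A B (mi + mj) (si * li + sj * lj)) := by
  rcases hsi with rfl | rfl <;> rcases hsj with rfl | rfl
  · rw [Pc_pos (by omega), Pc_pos (by omega)]; simp
  · rw [Pc_pos (by omega), Pc_pos (by omega), and_comm]; simp [sub_eq_add_neg]
  · rw [Pc_neg (by omega), Pc_neg (by omega), and_comm]
    rw [show -(mi - mj) = -1 * mi + 1 * mj by ring, show -(mi + mj) = -1 * mi - 1 * mj by ring]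
  · rw [Pc_neg (by omega), Pc_neg (by omega)]
    rw [show -(mi - mj) = -1 * mi - -1 * mj by ring, show -(mi + mj) = -1 * mi + -1 * mj by ring]

theorem single_iff {q A B mi si li : ℤ} (hsi : si = 1 ∨ si = -1) (hi : 0 < li) :
    Av q (si * mi) A B ↔ Pc q A B mi (si * li) := by
  rcases hsi with rfl | rfl
  · rw [Pc_pos (by omega)]; simp
  · rw [Pc_neg (by omega)]; simp

/-- The avoidance conditions in doubled integer coordinates. -/
def Cond (n c : ℕ) (q A B : ℤ) (Z : Fin n → ℤ) : Prop :=
  (∀ i j, i < j → Av q (Z i - Z j) A B ∧ Av q (Z i + Z j) A B) ∧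
  (c = 1 → ∀ i, Av q (2 * Z i) A B) ∧ (c = 2 → ∀ i, Av q (Z i) A B)

/-- The tuples of integer representatives of parity `p` satisfying the conditions. -/
def KK (n c : ℕ) (p q A B : ℤ) : Set (Fin n → ℤ) :=
  {Z | (∀ i, |Z i| < q) ∧ (∀ i, Even (Z i - p)) ∧ Cond n c q A B Z}

theorem Cond_iff_Good {n c : ℕ} {h p q A B : ℤ} {r : Fin n → ℕ} {s m Z : Fin n → ℤ}
    (hq : Odd q) (hA : 0 ≤ A) (hB : A ≤ B) (hp : c = 2 → Even p)
    (hri : Function.Injective r)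
    (hrm : ∀ i j, r j < r i → m j < m i) (hm : ∀ i, 0 ≤ m i ∧ m i < q)
    (hs : ∀ i, s i = 1 ∨ s i = -1) (hZ : ∀ i, Z i = s i * m i) (hZp : ∀ i, Even (Z i - p)) :
    Cond n c q A B Z ↔ Good c h r (fun i => s i * (n - (i : ℕ) : ℤ)) m q A B := by
  have hmp : ∀ i, Even (m i - p) := by
    intro i
    have h1 := hZp i
    rw [hZ] at h1
    rcases hs i with h2 | h2 <;> rw [h2] at h1 <;> rw [Int.even_iff] at * <;> omega
  have hl : ∀ i : Fin n, 0 < (n - (i : ℕ) : ℤ) := fun i => by have := i.2; omega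
  have hll : ∀ i j : Fin n, i ≠ j → (s i * (n - (i : ℕ) : ℤ) - s j * (n - (j : ℕ) : ℤ) ≠ 0) ∧
      (s i * (n - (i : ℕ) : ℤ) + s j * (n - (j : ℕ) : ℤ) ≠ 0) := by
    intro i j hij
    have h1 := i.2
    have h2 := j.2
    have h3 : (i : ℕ) ≠ j := fun h => hij (Fin.ext h)
    rcases hs i with h4 | h4 <;> rcases hs j with h5 | h5 <;> rw [h4, h5] <;> omega
  have hl1 : ∀ i : Fin n, s i * (n - (i : ℕ) : ℤ) ≠ 0 := by
    intro i
    have h1 := hl i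
    rcases hs i with h4 | h4 <;> rw [h4] <;> omega
  have hpair : ∀ i j : Fin n, i < j → ((Av q (Z i - Z j) A B ∧ Av q (Z i + Z j) A B) ↔
    (Pc q A B (m i - m j) (s i * (n - (i : ℕ) : ℤ) - s j * (n - (j : ℕ) : ℤ)) ∧
      Pc q A B (m i + m j) (s i * (n - (i : ℕ) : ℤ) + s j * (n - (j : ℕ) : ℤ)))) := by
    intro i j hij
    rw [hZ, hZ]
    exact pair_iff (hs i) (hs j) (hl j) (by have : (i : ℕ) < j := hij; omega)
  have hpair' : (∀ i j, i < j → Av q (Z i - Z j) A B ∧ Av q (Z i + Z j) A B) ↔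
    ∀ i j, r j < r i →
    (Pc q A B (m i - m j) (s i * (n - (i : ℕ) : ℤ) - s j * (n - (j : ℕ) : ℤ)) ∧
      Pc q A B (m i + m j) (s i * (n - (i : ℕ) : ℤ) + s j * (n - (j : ℕ) : ℤ))) := by
    constructor
    · intro H i j hij
      rcases lt_trichotomy i j with h1 | h1 | h1
      · exact (hpair i j h1).1 (H i j h1)
      · subst h1; omega
      · have := (hpair j i h1).1 (H j i h1)
        refine ⟨?_, ?_⟩
        · rw [← Pc_symm]; convert this.1 using 1 <;> ring
        · convert this.2 using 1 <;> ring
    · intro H i j hij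
      rw [hpair i j hij]
      have h3 : r i ≠ r j := fun h => hij.ne (hri h)
      rcases lt_or_gt_of_ne h3 with h1 | h1
      · have := H j i h1
        refine ⟨?_, ?_⟩
        · rw [← Pc_symm]; convert this.1 using 1 <;> ring
        · convert this.2 using 1 <;> ring
      · exact H i j h1
  unfold Cond
  rw [hpair']
  have hsub : ∀ i j, r j < r i → _ := fun i j hij =>
    Pc_iff (q := q) (D := m i - m j) (A := A) (B := B)
      (l := s i * (n - (i : ℕ) : ℤ) - s j * (n - (j : ℕ) : ℤ)) hq
      (by have h1 := hmp i; have h2 := hmp j; rw [Int.even_iff] at *; omega)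
      (by have := hrm i j hij; omega) (by have := hm i; have := hm j; omega) hA hB
      (hll i j (by rintro rfl; omega)).1
  have hadd : ∀ i j, r j < r i → _ := fun i j hij =>
    Pc_iff (q := q) (D := m i + m j) (A := A) (B := B)
      (l := s i * (n - (i : ℕ) : ℤ) + s j * (n - (j : ℕ) : ℤ)) hq
      (by have h1 := hmp i; have h2 := hmp j; rw [Int.even_iff] at *; omega)
      (by have := hm i; have := hm j; omega) (by have := hm i; have := hm j; omega) hA hB
      (hll i j (by rintro rfl; omega)).2
  have hone : c = 2 → ∀ i, _ := fun hc i =>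
    (single_iff (q := q) (A := A) (B := B) (mi := m i) (hs i) (hl i)).trans (
    Pc_iff (q := q) (D := m i) (A := A) (B := B)
      (l := s i * (n - (i : ℕ) : ℤ)) hq
      (by have h1 := hmp i; have h2 := hp hc; rw [Int.even_iff] at *; omega)
      (by have := hm i; omega) (by have := hm i; omega) hA hB
      (hl1 i))
  have hdbl : ∀ i, _ := fun i =>
    (single_iff (q := q) (A := A) (B := B) (mi := 2 * m i) (hs i) (hl i)).trans (
    Pc_iff (q := q) (D := 2 * m i) (A := A) (B := B)
      (l := s i * (n - (i : ℕ) : ℤ)) hq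
      (even_two_mul _)
      (by have := hm i; omega) (by have := hm i; omega) hA hB
      (hl1 i))
  constructor
  · rintro ⟨H1, H2, H3⟩ x y z H
    cases H with
    | sub i j hij => exact ((hsub i j hij).1 (H1 i j hij).1).1
    | subc i j hij => exact ((hsub i j hij).1 (H1 i j hij).1).2
    | add i j hij => exact ((hadd i j hij).1 (H1 i j hij).2).1
    | addc i j hij => exact ((hadd i j hij).1 (H1 i j hij).2).2
    | one i hc => exact ((hone hc i).1 (hZ i ▸ H3 hc i)).1
    | onec i hc => exact ((hone hc i).1 (hZ i ▸ H3 hc i)).2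
    | dbl i hc =>
      have h1 := H2 hc i
      rw [hZ, mul_left_comm] at h1
      have h2 := ((hdbl i).1 h1).1
      exact ⟨h2.1, fun hz => h2.2 (by linarith)⟩
    | dblc i hc =>
      have h1 := H2 hc i
      rw [hZ, mul_left_comm] at h1
      have h2 := ((hdbl i).1 h1).2
      exact ⟨h2.1, fun hz => h2.2 (by linarith)⟩
  · intro H
    refine ⟨fun i j hij => ⟨?_, ?_⟩, fun hc i => ?_, fun hc i => ?_⟩
    · exact (hsub i j hij).2 ⟨H _ _ _ (.sub i j hij), H _ _ _ (.subc i j hij)⟩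
    · exact (hadd i j hij).2 ⟨H _ _ _ (.add i j hij), H _ _ _ (.addc i j hij)⟩
    · have h1 := H _ _ _ (.dbl i hc)
      have h2 := H _ _ _ (.dblc i hc)
      rw [hZ, mul_left_comm]
      exact (hdbl i).2 ⟨⟨h1.1, fun hz => h1.2 (by linarith)⟩,
        ⟨h2.1, fun hz => h2.2 (by linarith)⟩⟩
    · rw [hZ]
      exact (hone hc i).2 ⟨H _ _ _ (.one i hc), H _ _ _ (.onec i hc)⟩

/-- Sign, with value `1` at zero. -/
def sg (z : ℤ) : ℤ := if z < 0 then -1 else 1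

/-- Rank of a coordinate by absolute value. -/
def rk {n : ℕ} (Z : Fin n → ℤ) (i : Fin n) : ℕ :=
  (Finset.univ.filter (fun j => |Z j| < |Z i|)).card

/-- The shift map. -/
def shf {n : ℕ} (c : ℕ) (t : ℤ) (Z : Fin n → ℤ) (i : Fin n) : ℤ :=
  sg (Z i) * (|Z i| + t * (2 * rk Z i + c))

theorem sg_cases (z : ℤ) : sg z = 1 ∨ sg z = -1 := by unfold sg; split_ifs <;> simp

theorem sg_mul_abs (z : ℤ) : z = sg z * |z| := by
  unfold sg; split_ifs with h
  · rw [abs_of_neg h]; ring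
  · rw [abs_of_nonneg (by omega)]; ring

theorem rk_lt {n : ℕ} (Z : Fin n → ℤ) (i : Fin n) : rk Z i < n := by
  unfold rk
  have : (Finset.univ.filter (fun j => |Z j| < |Z i|)).card < (Finset.univ : Finset (Fin n)).card :=
    Finset.card_lt_card (by
      rw [Finset.ssubset_univ_iff]
      intro h
      have := h ▸ Finset.mem_univ i
      simp at this)
  simpa using this

theorem rk_mono {n : ℕ} (Z : Fin n → ℤ) {i j : Fin n} (h : |Z j| < |Z i|) : rk Z j < rk Z i := by
  unfold rk
  apply Finset.card_lt_card
  rw [Finset.ssubset_iff_of_subset]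
  · exact ⟨j, by simpa using h, by simp⟩
  · intro k hk
    simp only [Finset.mem_filter, Finset.mem_univ, true_and] at *
    omega

theorem abs_lt_of_rk_lt {n : ℕ} (Z : Fin n → ℤ) {i j : Fin n} (h : rk Z j < rk Z i) :
    |Z j| < |Z i| := by
  rcases lt_trichotomy (|Z j|) (|Z i|) with h1 | h1 | h1
  · exact h1
  · exfalso; unfold rk at h; rw [h1] at h; omega
  · have := rk_mono Z h1; omega

theorem Cond.abs_inj {n c : ℕ} {q A B : ℤ} {Z : Fin n → ℤ} (hA : 0 ≤ A) (hB : A ≤ B)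
    (H : Cond n c q A B Z) : Function.Injective (fun i => |Z i|) := by
  have key : ∀ i j, i < j → |Z i| ≠ |Z j| := by
    intro i j hij he
    obtain ⟨h1, h2⟩ := H.1 i j hij
    rcases abs_eq_abs.1 he with h | h
    · exact h1 0 (by omega) (by omega) (by rw [h]; simp)
    · exact h2 0 (by omega) (by omega) (by rw [h]; simp)
  intro i j he
  rcases lt_trichotomy i j with h | h | h
  · exact absurd he (key i j h)
  · exact h
  · exact absurd he.symm (key j i h)

theorem shf_spec {n c : ℕ} {h p p' q q' A B t : ℤ} {Z : Fin n → ℤ}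
    (hn : 2 ≤ n) (hT : Typ n c h)
    (hq : Odd q) (hq' : Odd q') (hA : 0 ≤ A) (hB : A ≤ B) (hA' : 0 ≤ A + t)
    (hp : c = 2 → Even p) (hp' : c = 2 → Even p')
    (hpp : Even (p + t * c - p')) (hqq : q' = q + t * h) (hZ : Z ∈ KK n c p q A B) :
    shf c t Z ∈ KK n c p' q' (A + t) (B + t) ∧ shf c (-t) (shf c t Z) = Z := by
  obtain ⟨hb, hpar, hC⟩ := hZ
  have hinj := hC.abs_inj hA hB
  have hri : Function.Injective (rk Z) := by
    intro i j hij
    by_contra hne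
    have : |Z i| ≠ |Z j| := fun h => hne (hinj h)
    rcases lt_or_gt_of_ne this with h1 | h1 <;> have := rk_mono Z h1 <;> omega
  have hs : ∀ t < n, ∃ i, rk Z i = t := by
    have h1 : Function.Injective (fun i : Fin n => (⟨rk Z i, rk_lt Z i⟩ : Fin n)) := by
      intro i j hij
      exact hri (by simpa using hij)
    have h2 := Finite.surjective_of_injective h1
    intro t ht
    obtain ⟨i, hi⟩ := h2 ⟨t, ht⟩
    exact ⟨i, by simpa using hi⟩
  have hm : ∀ i, 0 ≤ |Z i| ∧ |Z i| < q := fun i => ⟨abs_nonneg _, hb i⟩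
  have G := (Cond_iff_Good (h := h) (r := rk Z) (s := fun i => sg (Z i)) (m := fun i => |Z i|)
    hq hA hB hp hri (fun i j hij => abs_lt_of_rk_lt Z hij) hm
    (fun i => sg_cases _) (fun i => sg_mul_abs _) hpar).1 hC
  set m' : Fin n → ℤ := fun i => |Z i| + t * (2 * rk Z i + c) with hm'
  have G' := G.shift (m' := m') hn hT (rk_lt Z) hs (fun i => rfl) hqq hA'
  have hbd : ∀ i, 0 ≤ m' i ∧ m' i < q' ∧ (0 < c → 0 < m' i) := G'.bounds (m := fun i => |Z i|) hn hT (rk_lt Z) hs (fun i => rfl) hqq hA' hm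
  have hW : ∀ i, shf c t Z i = sg (Z i) * m' i := fun i => rfl
  have habs : ∀ i, |shf c t Z i| = m' i := by
    intro i
    rw [hW, abs_mul, abs_of_nonneg (hbd i).1]
    rcases sg_cases (Z i) with h1 | h1 <;> rw [h1] <;> simp
  have hord : ∀ i j, rk Z j < rk Z i → m' j < m' i := by
    intro i j hij
    have := (G' _ _ _ (.sub i j hij)).1
    omega
  have hrk : ∀ i, rk (shf c t Z) i = rk Z i := by
    intro i
    unfold rk
    congr 1
    ext k
    simp only [Finset.mem_filter, Finset.mem_univ, true_and, habs]
    constructor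
    · intro h1
      rcases lt_trichotomy (rk Z k) (rk Z i) with h2 | h2 | h2
      · exact abs_lt_of_rk_lt Z h2
      · rw [hri h2] at h1; omega
      · have := hord _ _ h2; omega
    · intro h1; exact hord _ _ (rk_mono Z h1)
  have hpar' : ∀ i, Even (shf c t Z i - p') := by
    intro i
    have h1 := hpar i
    have e : m' i - p' = (|Z i| - p) + (p + t * c - p') + 2 * (t * rk Z i) := by
      simp only [hm']; ring
    have h2 : Even (|Z i| - p) := by
      rcases abs_choice (Z i) with h3 | h3 <;> rw [h3] <;> rw [Int.even_iff] at * <;> omega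
    have h3 : Even (m' i - p') := by
      rw [e]; exact (h2.add hpp).add (even_two_mul _)
    rw [hW]
    rcases sg_cases (Z i) with h4 | h4 <;> rw [h4] <;> rw [Int.even_iff] at * <;> omega
  refine ⟨⟨fun i => by rw [habs]; exact (hbd i).2.1, hpar', ?_⟩, ?_⟩
  · exact (Cond_iff_Good (h := h) (r := rk Z) (s := fun i => sg (Z i)) (m := m')
      hq' hA' (by omega) hp' hri hord (fun i => ⟨(hbd i).1, (hbd i).2.1⟩)
      (fun i => sg_cases _) hW hpar').2 G'
  · funext i
    have hsg : m' i = 0 → |Z i| = 0 := by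
      intro h0
      rcases Nat.eq_zero_or_pos c with hc | hc
      · have h1 : rk Z i = 0 := by
          by_contra h1
          obtain ⟨k, hk⟩ := hs 0 (by omega)
          have := hord i k (by omega)
          have := (hbd k).1
          omega
        simpa [hm', h1, hc] using h0
      · have := (hbd i).2.2 hc; omega
    have hz : |Z i| = m' i + (-t) * (2 * rk Z i + c) := by simp only [hm']; ring
    have e1 : shf c (-t) (shf c t Z) i = sg (shf c t Z i) * |Z i| := by
      rw [hz, ← habs, ← hrk]; rfl
    rw [e1]
    by_cases h0 : m' i = 0
    · have := hsg h0
      rw [this, mul_zero]; exact (abs_eq_zero.1 this).symm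
    · have h1 : 0 < m' i := lt_of_le_of_ne (hbd i).1 (Ne.symm h0)
      have h2 : sg (shf c t Z i) = sg (Z i) := by
        rw [hW]
        rcases sg_cases (Z i) with h4 | h4 <;> rw [h4] <;> unfold sg
        · rw [if_neg (by omega)]
        · rw [if_pos (by omega)]
      rw [h2]; exact (sg_mul_abs _).symm

theorem KK_ncard {n c : ℕ} {h p p' q q' a b : ℤ}
    (hn : 2 ≤ n) (hT : Typ n c h)
    (hq : Odd q) (hq' : Odd q') (ha : 0 ≤ a) (hab : a ≤ b)
    (hp : c = 2 → Even p) (hp' : c = 2 → Even p')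
    (hpp : Even (p + a * c - p')) (hqq : q = q' + a * h) :
    (KK n c p q a b).ncard = (KK n c p' q' 0 (b - a)).ncard := by
  have f1 : ∀ Z ∈ KK n c p q a b, shf c (-a) Z ∈ KK n c p' q' 0 (b - a) ∧
      shf c a (shf c (-a) Z) = Z := by
    intro Z hZ
    have := shf_spec (t := -a) (p' := p') (q' := q') hn hT hq hq' ha hab (by omega) hp hp'
      (by
        have e : p + -a * c - p' = (p + a * c - p') - 2 * (a * c) := by ring
        rw [e]; exact hpp.sub (even_two_mul _)) (by rw [hqq]; ring) hZ
    rw [neg_neg, add_neg_cancel, ← sub_eq_add_neg] at this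
    exact this
  have f2 : ∀ Z ∈ KK n c p' q' 0 (b - a), shf c a Z ∈ KK n c p q a b ∧
      shf c (-a) (shf c a Z) = Z := by
    intro Z hZ
    have := shf_spec (t := a) (p' := p) (q' := q) hn hT hq' hq le_rfl (by omega) (by omega) hp' hp
      (by
        have e : p' + a * c - p = -(p + a * c - p') + 2 * (a * c) := by ring
        rw [e]; exact hpp.neg.add (even_two_mul _)) hqq hZ
    rw [zero_add, sub_add_cancel] at this
    exact this
  refine Set.ncard_congr (fun Z _ => shf c (-a) Z) (fun Z hZ => (f1 Z hZ).1) ?_ ?_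
  · intro Z W hZ hW hE
    rw [← (f1 Z hZ).2, ← (f1 W hW).2, hE]
  · intro W hW
    exact ⟨shf c a W, (f2 W hW).1, (f2 W hW).2⟩

theorem avoids_iff {q : ℕ} (hq : Odd q) {y : ZMod q} {D A B : ℤ} (h : (D : ZMod q) = 2 * y) :
    Avoids y (-A) B ↔ Av q D A B := by
  have h2 : IsUnit (2 : ZMod q) := by
    obtain ⟨w, rfl⟩ := hq
    refine IsUnit.of_mul_eq_one (-(w : ZMod (2 * w + 1))) ?_
    have : ((2 * w + 1 : ℕ) : ZMod (2 * w + 1)) = 0 := ZMod.natCast_self _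
    push_cast at this
    linear_combination -this
  unfold Avoids Av
  refine forall_congr' fun k => forall_congr' fun _ => forall_congr' fun _ => not_congr ?_
  rw [← ZMod.intCast_zmod_eq_zero_iff_dvd]
  push_cast
  rw [h, sub_eq_zero, h2.mul_right_inj]

theorem ncard_eq_KK {n c q : ℕ} {p A B : ℤ} (hq : Odd q) (hA : 0 ≤ A) (hB : A ≤ B)
    (hp : c = 1 ∨ Even p) (S : Set (Fin n → ZMod q))
    (hS : ∀ (x : Fin n → ZMod q) (Z : Fin n → ℤ), (∀ i, (Z i : ZMod q) = 2 * x i) →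
      (x ∈ S ↔ Cond n c q A B Z)) :
    S.ncard = (KK n c p q A B).ncard := by
  obtain ⟨w, hw⟩ : ∃ w : ZMod q, 2 * w = 1 := by
    obtain ⟨w, rfl⟩ := hq
    refine ⟨(-(w : ZMod (2 * w + 1))), ?_⟩
    have : ((2 * w + 1 : ℕ) : ZMod (2 * w + 1)) = 0 := ZMod.natCast_self _
    push_cast at this
    linear_combination -this
  have hq0 : (0 : ℤ) < q := by obtain ⟨w, rfl⟩ := hq; positivity
  have hq1 : (q : ℤ) % 2 = 1 := by obtain ⟨w, rfl⟩ := hq; omega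
  symm
  refine Set.ncard_congr (fun Z _ i => (Z i : ZMod q) * w) ?_ ?_ ?_
  · intro Z hZ
    exact (hS _ Z (fun i => by linear_combination -(Z i : ZMod q) * hw)).2 hZ.2.2
  · intro Z W hZ hW hE
    funext i
    have h1 : (Z i : ZMod q) * w = W i * w := congrFun hE i
    have h2 : ((Z i : ℤ) : ZMod q) = (W i : ℤ) := by
      linear_combination 2 * h1 - ((Z i : ZMod q) - W i) * hw
    have h3 : (q : ℤ) ∣ Z i - W i := by
      rw [← ZMod.intCast_zmod_eq_zero_iff_dvd]; push_cast; rw [h2, sub_self]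
    have p1 := hZ.2.1 i
    have p2 := hW.2.1 i
    have b1 := abs_lt.1 (hZ.1 i)
    have b2 := abs_lt.1 (hW.1 i)
    have h4 : Even (Z i - W i) := by rw [Int.even_iff] at *; omega
    have h5 : ((2 : ℤ) * q) ∣ Z i - W i := by
      apply IsCoprime.mul_dvd _ h4.two_dvd h3
      exact ⟨-((q : ℤ) / 2), 1, by omega⟩
    have := Int.eq_zero_of_abs_lt_dvd h5 (by rw [abs_lt]; omega)
    omega
  · intro x hx
    haveI : NeZero q := ⟨by omega⟩
    have hex : ∀ y : ZMod q, ∃ z : ℤ, (z : ZMod q) = 2 * y ∧ Even (z - p) ∧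
        (|z| < q ∨ ((z : ZMod q) = 0 ∧ c = 1)) := by
      intro y
      have hv : (((2 * y).val : ℤ) : ZMod q) = 2 * y := by
        rw [Int.cast_natCast, ZMod.natCast_zmod_val]
      have hlt : ((2 * y).val : ℤ) < q := by exact_mod_cast ZMod.val_lt (2 * y)
      have hnn : 0 ≤ ((2 * y).val : ℤ) := by positivity
      generalize ((2 * y).val : ℤ) = v at *
      by_cases he : Even (v - p)
      · exact ⟨v, hv, he, Or.inl (by rw [abs_lt]; omega)⟩
      · refine ⟨v - q, by push_cast; rw [hv]; simp, by rw [Int.even_iff] at *; omega, ?_⟩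
        by_cases h0 : v = 0
        · right
          refine ⟨by rw [h0]; simp, ?_⟩
          rcases hp with h1 | h1
          · exact h1
          · exfalso; rw [h0] at he; apply he; simpa using h1
        · left; rw [abs_lt]; omega
    choose z hz1 hz2 hz3 using hex
    have hC : Cond n c q A B (fun i => z (x i)) := (hS x _ (fun i => hz1 _)).1 hx
    refine ⟨fun i => z (x i), ⟨fun i => ?_, fun i => hz2 _, hC⟩, ?_⟩
    · rcases hz3 (x i) with h1 | ⟨h1, hc⟩
      · exact h1
      · exfalso
        have := hC.2.1 hc i 0 (by omega) (by omega)
        apply this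
        rw [← ZMod.intCast_zmod_eq_zero_iff_dvd]
        push_cast; rw [h1]; simp
    · funext i
      simp only [hz1]
      linear_combination x i * hw

theorem N_B_eq {n q : ℕ} {A B : ℤ} (hq : Odd q) (hA : 0 ≤ A) (hB : A ≤ B) :
    N_B n q (-A) B = (KK n 2 0 q A B).ncard := by
  unfold N_B
  refine ncard_eq_KK hq hA hB (Or.inr (by simp)) _ ?_
  intro x Z hZ
  have h1 : ∀ i, Avoids (x i) (-A) B ↔ Av q (Z i) A B := fun i => avoids_iff hq (hZ i)
  have h2 : ∀ i j, Avoids (x i - x j) (-A) B ↔ Av q (Z i - Z j) A B :=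
    fun i j => avoids_iff hq (by push_cast; rw [hZ, hZ]; ring)
  have h3 : ∀ i j, Avoids (x i + x j) (-A) B ↔ Av q (Z i + Z j) A B :=
    fun i j => avoids_iff hq (by push_cast; rw [hZ, hZ]; ring)
  simp only [Set.mem_setOf_eq, Cond, h1, h2, h3]
  simp [and_comm]

theorem N_C_eq {n q : ℕ} {A B : ℤ} (p : ℤ) (hq : Odd q) (hA : 0 ≤ A) (hB : A ≤ B) :
    N_C n q (-A) B = (KK n 1 p q A B).ncard := by
  unfold N_C
  refine ncard_eq_KK hq hA hB (Or.inl rfl) _ ?_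
  intro x Z hZ
  have h1 : ∀ i, Avoids (2 * x i) (-A) B ↔ Av q (2 * Z i) A B :=
    fun i => avoids_iff hq (by push_cast; rw [hZ])
  have h2 : ∀ i j, Avoids (x i - x j) (-A) B ↔ Av q (Z i - Z j) A B :=
    fun i j => avoids_iff hq (by push_cast; rw [hZ, hZ]; ring)
  have h3 : ∀ i j, Avoids (x i + x j) (-A) B ↔ Av q (Z i + Z j) A B :=
    fun i j => avoids_iff hq (by push_cast; rw [hZ, hZ]; ring)
  simp only [Set.mem_setOf_eq, Cond, h1, h2, h3]
  simp [and_comm]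

theorem N_D_eq {n q : ℕ} {A B : ℤ} (hq : Odd q) (hA : 0 ≤ A) (hB : A ≤ B) :
    N_D n q (-A) B = (KK n 0 0 q A B).ncard := by
  unfold N_D
  refine ncard_eq_KK hq hA hB (Or.inr (by simp)) _ ?_
  intro x Z hZ
  have h2 : ∀ i j, Avoids (x i - x j) (-A) B ↔ Av q (Z i - Z j) A B :=
    fun i j => avoids_iff hq (by push_cast; rw [hZ, hZ]; ring)
  have h3 : ∀ i j, Avoids (x i + x j) (-A) B ↔ Av q (Z i + Z j) A B :=
    fun i j => avoids_iff hq (by push_cast; rw [hZ, hZ]; ring)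
  simp only [Set.mem_setOf_eq, Cond, h2, h3]
  simp

/-- Proposition 5.3 for types `B`, `C`, `D`. For `0 ≤ a ≤ b` and all
large odd `q`, `N_B(n,q,-a,b) = N_B(n,q-2na,0,b-a)`, and similarly for `N_C` and,
with shift `(2n-2)a`, for `N_D`. -/
theorem statement15 (n : ℕ) (hn : 2 ≤ n) (a b : ℕ) (hab : a ≤ b) :
    ∃ N : ℕ, ∀ q : ℕ, Odd q → N < q →
      N_B n q (-(a : ℤ)) (b : ℤ) = N_B n (q - 2 * n * a) 0 ((b : ℤ) - (a : ℤ)) ∧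
      N_C n q (-(a : ℤ)) (b : ℤ) = N_C n (q - 2 * n * a) 0 ((b : ℤ) - (a : ℤ)) ∧
      N_D n q (-(a : ℤ)) (b : ℤ) = N_D n (q - (2 * n - 2) * a) 0 ((b : ℤ) - (a : ℤ)) := by
  refine ⟨2 * n * a, fun q hq hN => ?_⟩
  have hb : (a : ℤ) ≤ b := by exact_mod_cast hab
  have hqz : Odd (q : ℤ) := by exact_mod_cast hq
  have hle : (2 * n - 2) * a ≤ 2 * n * a := Nat.mul_le_mul_right _ (by omega)
  have ho1 : Odd (q - 2 * n * a) :=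
    Nat.Odd.sub_even hN.le hq (by rw [mul_assoc]; exact even_two_mul _)
  have ho2 : Odd (q - (2 * n - 2) * a) :=
    Nat.Odd.sub_even (by omega) hq
      (by rw [show 2 * n - 2 = 2 * (n - 1) by omega, mul_assoc]; exact even_two_mul _)
  have e1 : (q : ℤ) = ((q - 2 * n * a : ℕ) : ℤ) + a * (2 * n) := by
    rw [Nat.cast_sub hN.le]; push_cast; ring
  have e2 : (q : ℤ) = ((q - (2 * n - 2) * a : ℕ) : ℤ) + a * (2 * n - 2) := by
    rw [Nat.cast_sub (by omega), Nat.cast_mul, Nat.cast_sub (by omega)]; push_cast; ring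
  have hz1 : Odd ((q - 2 * n * a : ℕ) : ℤ) := by exact_mod_cast ho1
  have hz2 : Odd ((q - (2 * n - 2) * a : ℕ) : ℤ) := by exact_mod_cast ho2
  have ha : (0 : ℤ) ≤ a := by positivity
  refine ⟨?_, ?_, ?_⟩
  · rw [N_B_eq hq ha hb, ← neg_zero, N_B_eq ho1 le_rfl (by omega)]
    exact KK_ncard hn (Or.inr (Or.inr ⟨rfl, rfl⟩)) hqz hz1 ha hb (by simp) (by simp)
      (by simp) e1
  · rw [N_C_eq 0 hq ha hb, ← neg_zero, N_C_eq a ho1 le_rfl (by omega)]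
    exact KK_ncard hn (Or.inr (Or.inl ⟨rfl, rfl⟩)) hqz hz1 ha hb (by simp) (by simp)
      (by simp) e1
  · rw [N_D_eq hq ha hb, ← neg_zero, N_D_eq ho2 le_rfl (by omega)]
    exact KK_ncard hn (Or.inl ⟨rfl, rfl⟩) hqz hz2 ha hb (by simp) (by simp)
      (by simp) e2
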